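/- arXiv:1707.09925 — 2 statements merged into one kernel-verified Lean document; each statement's English description precedes it below -/
import Mathlib

section
/- If an element a of PGL₂(F₂((y))) has finite order, then its order is 1, 2 or 3. -/
/-!
A scalar 2 × 2 matrix is its own adjugate, so if `A ^ n` is scalar, then `A` and `adj A = tr A - A`
have the same `n`-th power. When `tr A = 1`, this is a nontrivial polynomial equation for `A` with
integer coefficients, so `A`, and with it `det A = A (1 - A)`, is algebraic over the prime field.
Rescaling, `det A / (tr A) ^ 2` is algebraic whenever `tr A ≠ 0`. If the only nonzero algebraic
element is `1`, as in `F₂((y))`, then `det A = (tr A) ^ 2`, and Cayley-Hamilton makes `A ^ 3`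
scalar; if `tr A = 0`, it makes `A ^ 2` scalar.
-/

open Matrix Polynomial
open scoped MatrixGroups

section HahnSeries

variable {Γ k : Type*} [AddCommGroup Γ] [LinearOrder Γ] [IsOrderedAddMonoid Γ] [Field k]

theorem orderTop_eq_zero_of_isAlgebraic {x : HahnSeries Γ k} (hx : IsAlgebraic k x)
    (hx0 : x ≠ 0) : x.orderTop = 0 := by
  let v := (HahnSeries.addVal Γ k).toValuation
  have : v.IsTrivialOn k := ⟨fun _ hc ↦ HahnSeries.orderTop_single hc⟩
  by_contra h
  exact v.transcendental_of_ne_one k x hx0 h hx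

theorem algebraMap_coeff_zero_of_isAlgebraic {x : HahnSeries Γ k} (hx : IsAlgebraic k x) :
    algebraMap k (HahnSeries Γ k) (x.coeff 0) = x := by
  by_contra hne
  have hsub := (isAlgebraic_algebraMap (A := HahnSeries Γ k) (x.coeff 0)).sub hx
  have hcoeff := HahnSeries.coeff_orderTop_ne
    (orderTop_eq_zero_of_isAlgebraic hsub (sub_ne_zero.mpr hne))
  simp [HahnSeries.algebraMap_apply] at hcoeff

theorem isIntegrallyClosedIn_hahnSeries : IsIntegrallyClosedIn k (HahnSeries Γ k) :=
  isIntegrallyClosedIn_iff.mpr ⟨HahnSeries.C_injective, fun {x} hx ↦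
    ⟨x.coeff 0, algebraMap_coeff_zero_of_isAlgebraic hx.isAlgebraic⟩⟩

end HahnSeries

section TwoByTwo

variable {R : Type*} [CommRing R] (A : Matrix (Fin 2) (Fin 2) R)

theorem adjugate_fin_two_eq_trace_smul_one_sub : A.adjugate = A.trace • 1 - A := by
  ext i j
  fin_cases i <;> fin_cases j <;> simp [adjugate_fin_two, trace_fin_two]

theorem sq_fin_two_eq_trace_smul_sub : A ^ 2 = A.trace • A - A.det • 1 := by
  have h := A.mul_adjugate
  rw [adjugate_fin_two_eq_trace_smul_one_sub, mul_sub, mul_smul_comm, mul_one, ← sq] at h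
  rw [← h, sub_sub_cancel]

variable {A}

theorem sq_eq_smul_one_of_trace_eq_zero (h : A.trace = 0) : A ^ 2 = (-A.det) • 1 := by
  rw [sq_fin_two_eq_trace_smul_sub, h, zero_smul, zero_sub, neg_smul]

theorem cube_eq_smul_one_of_det_eq_trace_sq (h : A.det = A.trace ^ 2) :
    A ^ 3 = (-A.trace ^ 3) • 1 := by
  have hsq : A ^ 2 = A.trace • A - A.trace ^ 2 • 1 := by rw [sq_fin_two_eq_trace_smul_sub, h]
  calc A ^ 3 = A.trace • A ^ 2 - A.trace ^ 2 • A := by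
        rw [pow_succ, hsq, sub_mul, smul_mul_assoc, smul_one_mul, ← sq, hsq]
    _ = (-A.trace ^ 3) • 1 := by
        rw [hsq]
        module

theorem trace_smul_one_sub_pow_eq_pow {n : ℕ} {c : R} (h : A ^ n = c • 1) :
    (A.trace • 1 - A) ^ n = A ^ n := by
  rw [← adjugate_fin_two_eq_trace_smul_one_sub, ← adjugate_pow, h]
  simp [adjugate_smul]

theorem isAlgebraic_of_trace_eq_one_of_pow_eq_smul_one (k : Type*) [CommRing k] [Nontrivial k]
    [Algebra k R] (htr : A.trace = 1) {n : ℕ} (hn : n ≠ 0) {c : R} (h : A ^ n = c • 1) :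
    IsAlgebraic k A := by
  refine ⟨(1 - X) ^ n - X ^ n, fun h0 ↦ ?_, ?_⟩
  · simpa [hn] using congrArg (eval 0) h0
  · have hpow := trace_smul_one_sub_pow_eq_pow h
    rw [htr, one_smul] at hpow
    simp [hpow]

theorem isIntegral_det_of_trace_eq_one {k : Type*} [CommRing k] [Algebra k R]
    (htr : A.trace = 1) (hA : IsIntegral k A) : IsIntegral k A.det := by
  have hdet : algebraMap R (Matrix (Fin 2) (Fin 2) R) A.det = A - A ^ 2 := by
    rw [sq_fin_two_eq_trace_smul_sub, htr, one_smul, sub_sub_cancel, Algebra.algebraMap_eq_smul_one]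
  have hinj : Function.Injective (algebraMap R (Matrix (Fin 2) (Fin 2) R)) := fun _ _ ↦
    scalar_inj.mp
  rw [← isIntegral_algebraMap_iff hinj, hdet]
  have hmem := Algebra.self_mem_adjoin_singleton k A
  exact .of_mem_of_fg _ hA.fg_adjoin_singleton _ (sub_mem hmem (pow_mem hmem 2))

end TwoByTwo

section Field

variable {K : Type*} [Field K] {A : Matrix (Fin 2) (Fin 2) K}

theorem isIntegral_det_div_trace_sq (k : Type*) [Field k] [Algebra k K] (htr : A.trace ≠ 0)
    {n : ℕ} (hn : n ≠ 0) {c : K} (h : A ^ n = c • 1) : IsIntegral k (A.det / A.trace ^ 2) := by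
  let B := A.trace⁻¹ • A
  have hBtr : B.trace = 1 := by rw [trace_smul, smul_eq_mul, inv_mul_cancel₀ htr]
  have hBdet : B.det = A.det / A.trace ^ 2 := by
    rw [det_smul, Fintype.card_fin, inv_pow, inv_mul_eq_div]
  have hBpow : B ^ n = (A.trace⁻¹ ^ n * c) • 1 := by rw [_root_.smul_pow, h, smul_smul]
  rw [← hBdet]
  exact isIntegral_det_of_trace_eq_one hBtr
    (isAlgebraic_of_trace_eq_one_of_pow_eq_smul_one k hBtr hn hBpow).isIntegral

variable [Algebra (ZMod 2) K] [IsIntegrallyClosedIn (ZMod 2) K]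

theorem eq_one_of_isIntegral_zmod_two {u : K} (hu : IsIntegral (ZMod 2) u) (hu0 : u ≠ 0) :
    u = 1 := by
  obtain ⟨z, rfl⟩ := IsIntegrallyClosedIn.isIntegral_iff.mp hu
  have hz : z = 1 := Fin.eq_one_of_ne_zero z (ne_zero_of_map hu0)
  rw [hz, map_one]

theorem det_eq_trace_sq_of_pow_eq_smul_one (hdet : A.det ≠ 0) (htr : A.trace ≠ 0)
    {n : ℕ} (hn : n ≠ 0) {c : K} (h : A ^ n = c • 1) : A.det = A.trace ^ 2 := by
  have htr2 : A.trace ^ 2 ≠ 0 := pow_ne_zero 2 htr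
  exact (div_eq_one_iff_eq htr2).mp <| eq_one_of_isIntegral_zmod_two
    (isIntegral_det_div_trace_sq (ZMod 2) htr hn h) (div_ne_zero hdet htr2)

end Field

theorem projGenLinGroup_mk_pow_eq_one_iff {n R : Type*} [Fintype n] [DecidableEq n] [CommRing R]
    (g : GL n R) (m : ℕ) :
    ProjGenLinGroup.mk g ^ m = 1 ↔ ∃ c : R, (g : Matrix n n R) ^ m = c • 1 := by
  rw [← map_pow, ProjGenLinGroup.mk_eq_one,
    GeneralLinearGroup.mem_center_iff_val_mem_range_scalar]
  simp only [Set.mem_range, Units.val_pow_eq_pow_val, scalar_apply, smul_one_eq_diagonal, eq_comm]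

theorem PGL2_LaurentSeries_ZMod2_finite_order_le_three_general {K : Type*} [Field K]
    [Algebra (ZMod 2) K] [IsIntegrallyClosedIn (ZMod 2) K] (a : PGL(2, K)) (ha : IsOfFinOrder a) :
    orderOf a = 1 ∨ orderOf a = 2 ∨ orderOf a = 3 := by
  obtain ⟨g, rfl⟩ := ProjGenLinGroup.mk_surjective a
  obtain ⟨n, hn, hpow⟩ := isOfFinOrder_iff_pow_eq_one.mp ha
  obtain ⟨c, hc⟩ := (projGenLinGroup_mk_pow_eq_one_iff g n).mp hpow
  by_cases htr : g.val.trace = 0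
  · have hdvd : orderOf (ProjGenLinGroup.mk g) ∣ 2 := orderOf_dvd_of_pow_eq_one <|
      (projGenLinGroup_mk_pow_eq_one_iff g 2).mpr ⟨_, sq_eq_smul_one_of_trace_eq_zero htr⟩
    exact ((Nat.dvd_prime Nat.prime_two).mp hdvd).imp_right .inl
  · have hdet := det_eq_trace_sq_of_pow_eq_smul_one g.det_ne_zero htr hn.ne' hc
    have hdvd : orderOf (ProjGenLinGroup.mk g) ∣ 3 := orderOf_dvd_of_pow_eq_one <|
      (projGenLinGroup_mk_pow_eq_one_iff g 3).mpr ⟨_, cube_eq_smul_one_of_det_eq_trace_sq hdet⟩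
    exact ((Nat.dvd_prime Nat.prime_three).mp hdvd).imp_right .inr

theorem PGL2_LaurentSeries_ZMod2_finite_order_le_three
    (a : GL (Fin 2) (LaurentSeries (ZMod 2)) ⧸
        Subgroup.center (GL (Fin 2) (LaurentSeries (ZMod 2))))
    (ha : IsOfFinOrder a) :
    orderOf a = 1 ∨ orderOf a = 2 ∨ orderOf a = 3 :=
  -- Instance search would find `HahnSeries.powerSeriesAlgebra`, hence the explicit instance.
  @PGL2_LaurentSeries_ZMod2_finite_order_le_three_general (LaurentSeries (ZMod 2)) _
    HahnSeries.instAlgebra isIntegrallyClosedIn_hahnSeries a ha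
end

section
/- Let A = {b, b', c} be a three-element set and τ the involution of A swapping b and b' and fixing c, and let I = {0, 1}. Define permutations σ₁, σ₂, σ₃ of A × I as follows, where p denotes the 3-cycle (b c b') (so p(b) = c, p(c) = b', p(b') = b) and p⁻¹ = (b' c b): σ₁(x, 0) = (p⁻¹(x), 1) and σ₁(x, 1) = (p(x), 0); σ₂(x, 0) = (p(x), 1) and σ₂(x, 1) = (p⁻¹(x), 0); σ₃(x, i) = (τ(x), 1−i). Then the subgroup of Sym(A × I) generated by σ₁, σ₂, σ₃ equals the subgroup P = {ρ ∈ Sym(A × I) : there exist σ ∈ Sym(A) and ε ∈ Sym(I) such that for all (x, i), ρ(x, i) = (σ(x), ε(i)) if ε(i) = 0 and ρ(x, i) = ((τ∘σ∘τ)(x), ε(i)) if ε(i) = 1}; in particular this subgroup has order 12 and is isomorphic to Sym(A) × ℤ/2ℤ. -/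
/-!
STATEMENT 16: Let `A = {b, b', c}` be a three-element set, `τ` the involution of `A`
swapping `b` and `b'` and fixing `c`, and `I = {0, 1}` (formalized as `Fin 2`).
With `p` the 3-cycle `(b c b')`, define permutations `σ₁, σ₂, σ₃` of `A × I` by
`σ₁(x,0) = (p⁻¹ x, 1)`, `σ₁(x,1) = (p x, 0)`; `σ₂(x,0) = (p x, 1)`, `σ₂(x,1) = (p⁻¹ x, 0)`;
`σ₃(x,i) = (τ x, 1-i)`.  Then the subgroup generated by `σ₁, σ₂, σ₃` equals (as a set)
the subgroup `P = {ρ | ∃ σ ∈ Sym(A), ε ∈ Sym(I), ρ(x,i) = (σ x, ε i)` if `ε i = 0` and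
`ρ(x,i) = ((τστ) x, ε i)` if `ε i = 1}`; in particular it has order 12 and is isomorphic
to `Sym(A) × ℤ/2ℤ`.
-/

/-!
In the coordinates of `A × {0, 1}` in which the layer `A × {1}` is relabelled by the transposition
`τ = (b b')`, the group `P` is the product action of `Sym(A) × Sym({0, 1})`. As the 3-cycle is
`p = (c b') τ = τ (c b)`, the three generators become the pairs `((c x), (0 1))` for
`x = b', b, c`. The last of them is `(1, (0 1))`, so dividing by it splits off the second factor,
and the star of transpositions `(c x)` centred at `c` generates `Sym(A)`.
-/

open Equiv Equiv.Perm

theorem closure_prod_of_one_mem_left {G H : Type*} [Group G] [Group H] {s : Set G} {t : Set H}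
    (hs : 1 ∈ s) (ht : t.Nonempty) :
    Subgroup.closure (s ×ˢ t) = (Subgroup.closure s).prod (Subgroup.closure t) := by
  obtain ⟨z, hz⟩ := ht
  have mem_closure {x y} (hx : x ∈ s) (hy : y ∈ t) : (x, y) ∈ Subgroup.closure (s ×ˢ t) :=
    Subgroup.subset_closure ⟨hx, hy⟩
  apply le_antisymm
  · rw [Subgroup.closure_le]
    exact Set.prod_mono Subgroup.subset_closure Subgroup.subset_closure
  · simp only [Subgroup.prod_le_iff, Subgroup.map_le_iff_le_comap, Subgroup.closure_le]
    refine ⟨fun x hx => ?_, fun y hy => mem_closure hs hy⟩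
    simpa using mul_mem (mem_closure hx hz) (inv_mem (mem_closure hs hz))

theorem closure_range_swap {α : Type*} [Finite α] [DecidableEq α] (a : α) :
    Subgroup.closure (Set.range (swap a)) = ⊤ := by
  have swap_mem (x : α) : swap a x ∈ Subgroup.closure (Set.range (swap a)) :=
    Subgroup.subset_closure ⟨x, rfl⟩
  rw [eq_top_iff, ← closure_isSwap, Subgroup.closure_le]
  rintro _ ⟨x, y, -, rfl⟩
  exact SubmonoidClass.swap_mem_trans _ (swap_comm a x ▸ swap_mem x) (swap_mem y)

theorem natCard_perm_fin_two : Nat.card (Perm (Fin 2)) = 2 := by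
  rw [Nat.card_perm, Nat.card_fin, Nat.factorial_two]

theorem closure_swap_zero_one : Subgroup.closure {swap (0 : Fin 2) 1} = ⊤ := by
  rw [← Subgroup.zpowers_eq_closure]
  exact zpowers_eq_top_of_prime_card natCard_perm_fin_two (by decide)

theorem cycle_eq_swap_mul_swap {α : Type*} [DecidableEq α] {p : Perm α} {x y z : α}
    (hx : p x = y) (hy : p y = z) (hz : p z = x)
    (hfix : ∀ w, w ≠ x → w ≠ y → w ≠ z → p w = w) :
    p = swap y z * swap x z ∧ p = swap x z * swap y x := by
  constructor <;> ext w <;> simp only [Perm.mul_apply, swap_apply_def] <;> grind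

section TwistedProduct

variable {α ι : Type*}

/-- The product action of `Sym(α) × Sym(ι)` on `α × ι`, transported along the relabelling of each
layer `α × {i}` by `t i`. For `ι = {0, 1}` and `t = (1, τ)` its image is the group `P^𝒜`; the
transport turns the semidirect product of the paper into a direct one. -/
def twistedProdHom (t : ι → Perm α) : Perm α × Perm ι →* Perm (α × ι) where
  toFun g := (prodCongrLeft t).permCongr (prodCongr g.1 g.2)
  map_one' := by ext <;> simp
  map_mul' g h := by ext <;> simp

theorem twistedProdHom_apply (t : ι → Perm α) (σ : Perm α) (ε : Perm ι) (x : α) (i : ι) :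
    twistedProdHom t (σ, ε) (x, i) = (t (ε i) (σ ((t i)⁻¹ x)), ε i) :=
  rfl

theorem twistedProdHom_injective [Nonempty α] [Nonempty ι] (t : ι → Perm α) :
    Function.Injective (twistedProdHom t) := by
  rintro ⟨σ, ε⟩ ⟨σ', ε'⟩ h
  have h_apply (x : α) (i : ι) := DFunLike.congr_fun h (x, i)
  simp only [twistedProdHom_apply, Prod.mk.injEq] at h_apply
  obtain rfl : ε = ε' := Equiv.ext fun i => (h_apply (Classical.arbitrary α) i).2
  obtain rfl : σ = σ' := Equiv.ext fun x => by
    simpa using (h_apply (t (Classical.arbitrary ι) x) (Classical.arbitrary ι)).1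
  rfl

theorem twistedProdHom_swap_zero_one_eq {τ g : Perm α} {ρ : Perm (α × Fin 2)}
    (h₀ : ∀ x, ρ (x, 0) = ((τ * g) x, 1)) (h₁ : ∀ x, ρ (x, 1) = ((g * τ⁻¹) x, 0)) :
    twistedProdHom ![1, τ] (g, swap 0 1) = ρ := by
  ext1 ⟨x, i⟩
  fin_cases i <;> simp [twistedProdHom_apply, h₀, h₁]

theorem closure_range_twistedProdHom_swap [Finite α] [DecidableEq α] (t : Fin 2 → Perm α) (a : α) :
    Subgroup.closure (Set.range fun x => twistedProdHom t (swap a x, swap 0 1)) =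
      (twistedProdHom t).range := by
  have h_image : (Set.range fun x => twistedProdHom t (swap a x, swap 0 1)) =
      twistedProdHom t '' (Set.range (swap a) ×ˢ {swap 0 1}) := by
    rw [Set.prod_singleton, ← Set.range_comp, ← Set.range_comp]
    rfl
  have h_one : 1 ∈ Set.range (swap a) := ⟨a, swap_self a⟩
  rw [h_image, ← MonoidHom.map_closure,
    closure_prod_of_one_mem_left h_one (Set.singleton_nonempty _),
    closure_range_swap, closure_swap_zero_one, Subgroup.top_prod_top, ← MonoidHom.range_eq_map]

theorem eq_one_or_eq_swap_zero_one (ε : Perm (Fin 2)) : ε = 1 ∨ ε = swap 0 1 := by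
  decide +revert

-- `σ` is prescribed on the layer `ε⁻¹ 0`, the one sent to layer `0`; the factor `![1, τ] (ε⁻¹ 0)`
-- cancels the relabelling of that layer.
theorem twistedProdHom_fin_two_eq_iff {τ σ : Perm α} {ε : Perm (Fin 2)} {ρ : Perm (α × Fin 2)}
    (hτ : Function.Involutive τ) :
    twistedProdHom ![1, τ] (σ * ![1, τ] (ε⁻¹ 0), ε) = ρ ↔ ∀ (x : α) (i : Fin 2),
      (ε i = 0 → ρ (x, i) = (σ x, ε i)) ∧ (ε i = 1 → ρ (x, i) = ((τ * σ * τ) x, ε i)) := by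
  have hτ_inv : τ⁻¹ = τ := Function.Involutive.symm_eq_self_of_involutive τ hτ
  rw [Equiv.ext_iff, Prod.forall]
  refine forall₂_congr fun x i => ?_
  rw [twistedProdHom_apply]
  obtain rfl | rfl := eq_one_or_eq_swap_zero_one ε <;> fin_cases i <;>
    simp [hτ_inv, hτ _, eq_comm (b := ρ _)]

theorem coe_range_twistedProdHom_fin_two {τ : Perm α} (hτ : Function.Involutive τ) :
    ((twistedProdHom ![1, τ]).range : Set (Perm (α × Fin 2))) =
      {ρ | ∃ (σ : Perm α) (ε : Perm (Fin 2)), ∀ (x : α) (i : Fin 2),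
        (ε i = 0 → ρ (x, i) = (σ x, ε i)) ∧ (ε i = 1 → ρ (x, i) = ((τ * σ * τ) x, ε i))} := by
  ext ρ
  simp only [← twistedProdHom_fin_two_eq_iff hτ]
  constructor
  · rintro ⟨⟨σ, ε⟩, rfl⟩
    exact ⟨σ * (![1, τ] (ε⁻¹ 0))⁻¹, ε, by rw [inv_mul_cancel_right]⟩
  · rintro ⟨σ, ε, h⟩
    exact ⟨_, h⟩

theorem natCard_range_twistedProdHom [Nonempty α] [Nonempty ι] (t : ι → Perm α) :
    Nat.card (twistedProdHom t).range = Nat.card (Perm α) * Nat.card (Perm ι) := by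
  rw [← Nat.card_congr (MonoidHom.ofInjective (twistedProdHom_injective t)).toEquiv, Nat.card_prod]

end TwistedProduct

theorem local_permutation_group_eq
    (A : Type*) [DecidableEq A] (b b' c : A)
    (hbb' : b ≠ b') (hbc : b ≠ c) (hb'c : b' ≠ c)
    (hA : ∀ x : A, x = b ∨ x = b' ∨ x = c)
    (p : Equiv.Perm A) (hpb : p b = c) (hpc : p c = b') (hpb' : p b' = b)
    (σ₁ σ₂ σ₃ : Equiv.Perm (A × Fin 2))
    (hσ₁ : ∀ x : A, σ₁ (x, 0) = (p⁻¹ x, 1) ∧ σ₁ (x, 1) = (p x, 0))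
    (hσ₂ : ∀ x : A, σ₂ (x, 0) = (p x, 1) ∧ σ₂ (x, 1) = (p⁻¹ x, 0))
    (hσ₃ : ∀ (x : A) (i : Fin 2), σ₃ (x, i) = (Equiv.swap b b' x, 1 - i)) :
    ((Subgroup.closure {σ₁, σ₂, σ₃} : Subgroup (Equiv.Perm (A × Fin 2))) : Set _) =
      {ρ : Equiv.Perm (A × Fin 2) |
          ∃ (σ : Equiv.Perm A) (ε : Equiv.Perm (Fin 2)), ∀ (x : A) (i : Fin 2),
            (ε i = 0 → ρ (x, i) = (σ x, ε i)) ∧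
            (ε i = 1 → ρ (x, i) = ((Equiv.swap b b' * σ * Equiv.swap b b') x, ε i))} ∧
    Nat.card (Subgroup.closure {σ₁, σ₂, σ₃} : Subgroup (Equiv.Perm (A × Fin 2))) = 12 ∧
    Nonempty ((Subgroup.closure {σ₁, σ₂, σ₃} : Subgroup (Equiv.Perm (A × Fin 2))) ≃*
      Equiv.Perm A × Multiplicative (ZMod 2)) := by
  have huniv : (Set.univ : Set A) = {b', b, c} :=
    (Set.eq_univ_of_forall fun x => or_left_comm.1 (hA x)).symm
  have : Finite A := Set.finite_univ_iff.1 (huniv ▸ Set.toFinite _)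
  have : Nonempty A := ⟨c⟩
  have hcard : Nat.card A = 3 := (Set.ncard_univ A).symm.trans <|
    Set.ncard_eq_three.2 ⟨b', b, c, hbb'.symm, hb'c, hbc, huniv⟩
  obtain ⟨hp₁, hp₂⟩ : p = swap c b' * swap b b' ∧ p = swap b b' * swap c b :=
    cycle_eq_swap_mul_swap hpb hpc hpb' fun x hb hc hb' => by simpa [hb, hb', hc] using hA x
  have h₁ : twistedProdHom ![1, swap b b'] (swap c b', swap 0 1) = σ₁ :=
    twistedProdHom_swap_zero_one_eq (by simp [hσ₁, hp₁]) (by simp [hσ₁, hp₁])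
  have h₂ : twistedProdHom ![1, swap b b'] (swap c b, swap 0 1) = σ₂ :=
    twistedProdHom_swap_zero_one_eq (by simp [hσ₂, hp₂]) (by simp [hσ₂, hp₂])
  have h₃ : twistedProdHom ![1, swap b b'] (swap c c, swap 0 1) = σ₃ :=
    twistedProdHom_swap_zero_one_eq (by simp [hσ₃]) (by simp [hσ₃])
  have hclosure : Subgroup.closure {σ₁, σ₂, σ₃} = (twistedProdHom ![1, swap b b']).range := by
    rw [← closure_range_twistedProdHom_swap _ c, ← Set.image_univ, huniv, Set.image_insert_eq,
      Set.image_pair, h₁, h₂, h₃]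
  rw [hclosure]
  refine ⟨coe_range_twistedProdHom_fin_two (swap_apply_self b b'), ?_, ⟨?_⟩⟩
  · rw [natCard_range_twistedProdHom, Nat.card_perm, hcard, natCard_perm_fin_two]
    rfl
  · exact (MonoidHom.ofInjective (twistedProdHom_injective _)).symm.trans
      ((MulEquiv.refl _).prodCongr (mulEquivOfPrimeCardEq natCard_perm_fin_two (Nat.card_zmod 2)))
end
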